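/- Let K ≥ 1 and let A be a nonempty subset of F_2^n satisfying |A + A| ≤ K·|A|. Then for every real ε > 0, every positive integer t, and every set B ⊆ F_2^n there exists a set X ⊆ F_2^n with the following properties: (1) X is contained in an affine shift of A, i.e. there exists c ∈ F_2^n with X ⊆ c + A; (2) |X| ≥ |A|/(2·K^{t−1}); (3) for every positive integer ℓ, all x₁, …, x_ℓ ∈ X, and every nonempty subset S ⊆ F_2^n, Pr_{y∈S}[ ρ_{A→B}(y) − ρ_{A→B}(y + x₁ + ⋯ + x_ℓ) ≤ 2εℓ·√(ρ_{A→B}(y)) ] ≥ 1 − 8ℓ·(|A+B|/|S|)·exp(−ε²t/4). -/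

import Mathlib

open scoped Classical Pointwise

/-- The measure of additive containment: `ρ_{A→B}(y) = |{a ∈ A : y + a ∈ B}| / |A|`. -/
noncomputable def rhoMeas {n : ℕ} (A B : Finset (Fin n → ZMod 2)) (y : Fin n → ZMod 2) : ℝ :=
  ((A.filter fun a => y + a ∈ B).card : ℝ) / A.card

/-- `Pr_{y ∈ S}[P y] = |{y ∈ S : P y}| / |S|`. -/
noncomputable def prOver {n : ℕ} (S : Finset (Fin n → ZMod 2))
    (P : (Fin n → ZMod 2) → Prop) : ℝ :=
  ((S.filter fun y => P y).card : ℝ) / S.card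

noncomputable def empN {n t : ℕ} (B : Finset (Fin n → ZMod 2)) (a : Fin t → (Fin n → ZMod 2))
    (y : Fin n → ZMod 2) : ℝ := ∑ i, if y + a i ∈ B then (1:ℝ) else 0

def bad1 {n t : ℕ} (A B : Finset (Fin n → ZMod 2)) (ε : ℝ) (a : Fin t → (Fin n → ZMod 2))
    (y : Fin n → ZMod 2) : Prop :=
  empN B a y < t * (rhoMeas A B y - ε * √(rhoMeas A B y))

def bad2 {n t : ℕ} (A B : Finset (Fin n → ZMod 2)) (ε : ℝ) (a : Fin t → (Fin n → ZMod 2))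
    (y : Fin n → ZMod 2) : Prop :=
  rhoMeas A B y < empN B a y / t - ε * √(empN B a y / t)

lemma empN_nonneg {n t : ℕ} (B : Finset (Fin n → ZMod 2)) (a : Fin t → (Fin n → ZMod 2))
    (y : Fin n → ZMod 2) : 0 ≤ empN B a y :=
  Finset.sum_nonneg fun i _ => by split_ifs <;> norm_num

lemma rho_nonneg {n : ℕ} (A B : Finset (Fin n → ZMod 2)) (y : Fin n → ZMod 2) :
    0 ≤ rhoMeas A B y := by unfold rhoMeas; positivity

lemma chartwo {n : ℕ} (x : Fin n → ZMod 2) : x + x = 0 := by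
  funext i; exact CharTwo.add_self_eq_zero (x i)

lemma mem_of_add {n : ℕ} {A B : Finset (Fin n → ZMod 2)} {a y : Fin n → ZMod 2}
    (ha : a ∈ A) (h : y + a ∈ B) : y ∈ A + B := by
  have : y = a + (y + a) := by
    rw [add_comm y a, ← add_assoc, chartwo, zero_add]
  rw [this]; exact Finset.add_mem_add ha h

lemma mgf {n t : ℕ} (A B : Finset (Fin n → ZMod 2)) (hA : A.Nonempty) (y : Fin n → ZMod 2)
    (s : ℝ) :
    ∑ a ∈ Fintype.piFinset (fun _ : Fin t => A), Real.exp (s * empN B a y) ≤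
      (A.card : ℝ) ^ t * Real.exp (t * (rhoMeas A B y * (Real.exp s - 1))) := by
  have hA0 : (0:ℝ) < A.card := by exact_mod_cast hA.card_pos
  have h1 : ∀ a : Fin t → (Fin n → ZMod 2), Real.exp (s * empN B a y) =
      ∏ i, (fun _ b => Real.exp (s * if y + b ∈ B then (1:ℝ) else 0)) i (a i) := by
    intro a
    rw [empN, Finset.mul_sum, Real.exp_sum]
  simp_rw [h1]
  have h0 := Finset.prod_univ_sum (fun _ : Fin t => A)
    (fun _ b => Real.exp (s * if y + b ∈ B then (1:ℝ) else 0))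
  refine le_of_eq_of_le (Eq.trans ?_ h0.symm) ?_
  · congr!
  have h2 : ∑ b ∈ A, Real.exp (s * if y + b ∈ B then (1:ℝ) else 0) =
      A.card * (1 + rhoMeas A B y * (Real.exp s - 1)) := by
    have : ∀ b, Real.exp (s * if y + b ∈ B then (1:ℝ) else 0) =
        1 + (if y + b ∈ B then (1:ℝ) else 0) * (Real.exp s - 1) := by
      intro b; split_ifs <;> simp
    simp_rw [this]
    rw [Finset.sum_add_distrib, ← Finset.sum_mul, Finset.sum_boole, rhoMeas]
    field_simp
    simp
  simp only [h2, Finset.prod_const, Finset.card_univ, Fintype.card_fin]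
  rw [mul_pow, Real.exp_nat_mul]
  have h3 : 0 ≤ A.card * (1 + rhoMeas A B y * (Real.exp s - 1)) := by
    rw [← h2]; exact Finset.sum_nonneg fun _ _ => (Real.exp_pos _).le
  have h4 : 0 ≤ 1 + rhoMeas A B y * (Real.exp s - 1) := nonneg_of_mul_nonneg_right h3 hA0
  gcongr
  have := Real.add_one_le_exp (rhoMeas A B y * (Real.exp s - 1))
  linarith

lemma tail {n t : ℕ} (A B : Finset (Fin n → ZMod 2)) (hA : A.Nonempty) (y : Fin n → ZMod 2)
    (s c : ℝ) (hs : |s| ≤ 1) (P : (Fin t → (Fin n → ZMod 2)) → Prop)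
    (hP : ∀ a, P a → s * (t * c) ≤ s * empN B a y) (e : ℝ)
    (he : rhoMeas A B y * (s + s ^ 2) - s * c ≤ e) :
    (((Fintype.piFinset (fun _ : Fin t => A)).filter P).card : ℝ) ≤
      (A.card : ℝ) ^ t * Real.exp (t * e) := by
  have h1 : (((Fintype.piFinset (fun _ : Fin t => A)).filter P).card : ℝ) * Real.exp (s * (t * c))
      ≤ ∑ a ∈ Fintype.piFinset (fun _ : Fin t => A), Real.exp (s * empN B a y) := by
    rw [← nsmul_eq_mul]
    refine (Finset.card_nsmul_le_sum _ (fun a => Real.exp (s * empN B a y)) _ ?_).trans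
      (Finset.sum_le_sum_of_subset_of_nonneg (Finset.filter_subset _ _)
        fun _ _ _ => (Real.exp_pos _).le)
    intro a ha
    exact Real.exp_le_exp.2 (hP a (Finset.mem_filter.1 ha).2)
  have h2 := h1.trans (mgf A B hA y s)
  rw [← le_div_iff₀ (Real.exp_pos _), mul_div_assoc, ← Real.exp_sub] at h2
  refine h2.trans ?_
  gcongr
  have h3 : Real.exp s - 1 ≤ s + s ^ 2 := by
    have := (abs_le.1 (Real.abs_exp_sub_one_sub_id_le hs)).2
    linarith
  have h4 := mul_le_mul_of_nonneg_left h3 (rho_nonneg A B y)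
  have h5 : (0:ℝ) ≤ t := by positivity
  calc _ = (t:ℝ) * (rhoMeas A B y * (Real.exp s - 1) - s * c) := by ring
    _ ≤ _ := mul_le_mul_of_nonneg_left (by linarith) h5

lemma tail1 {n t : ℕ} (A B : Finset (Fin n → ZMod 2)) (hA : A.Nonempty) (y : Fin n → ZMod 2)
    (ε : ℝ) (hε : 0 < ε) :
    (((Fintype.piFinset (fun _ : Fin t => A)).filter fun a => bad1 A B ε a y).card : ℝ) ≤
      (A.card : ℝ) ^ t * Real.exp (-(ε ^ 2 * t) / 4) := by
  have hp := rho_nonneg A B y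
  have hsq := Real.sq_sqrt hp
  have hs0 := Real.sqrt_nonneg (rhoMeas A B y)
  set u := √(rhoMeas A B y) with hu
  by_cases hc : u ≤ ε
  · have : (Fintype.piFinset (fun _ : Fin t => A)).filter (fun a => bad1 A B ε a y) = ∅ := by
      refine Finset.filter_false_of_mem fun a _ hb => ?_
      unfold bad1 at hb
      have h1 := empN_nonneg B a y
      have h2 : (0:ℝ) ≤ t := by positivity
      rw [← hu] at hb
      have : rhoMeas A B y - ε * u ≤ 0 := by nlinarith
      have := mul_nonpos_of_nonneg_of_nonpos h2 this
      linarith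
    rw [this]; simp; positivity
  · push Not at hc
    have hu0 : 0 < u := hε.trans hc
    have := tail (t := t) A B hA y (-(ε / (2 * u))) (u ^ 2 - ε * u) (by
      rw [abs_neg, abs_of_pos (by positivity), div_le_one (by positivity)]; linarith)
      (fun a => bad1 A B ε a y) (by
        intro a ha
        unfold bad1 at ha
        rw [← hu, ← hsq] at ha
        have : 0 < ε / (2 * u) := by positivity
        nlinarith) (-(ε ^ 2) / 4) (by
        rw [← hsq]; apply le_of_eq; field_simp; ring)
    convert this using 3
    ring

lemma tail2 {n t : ℕ} (ht : 0 < t) (A B : Finset (Fin n → ZMod 2)) (hA : A.Nonempty)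
    (y : Fin n → ZMod 2) (ε : ℝ) (hε : 0 < ε) :
    (((Fintype.piFinset (fun _ : Fin t => A)).filter fun a => bad2 A B ε a y).card : ℝ) ≤
      (A.card : ℝ) ^ t * Real.exp (-(ε ^ 2 * t) / 4) := by
  have hp := rho_nonneg A B y
  have ht' : (0:ℝ) < t := by exact_mod_cast ht
  obtain ⟨u, hu, huε⟩ : ∃ u : ℝ, u ^ 2 = rhoMeas A B y + ε * u ∧ ε ≤ u := by
    have h := Real.sq_sqrt (show 0 ≤ ε ^ 2 + 4 * rhoMeas A B y by positivity)
    have h2 : ε ≤ √(ε ^ 2 + 4 * rhoMeas A B y) := Real.le_sqrt_of_sq_le (by linarith)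
    exact ⟨(ε + √(ε ^ 2 + 4 * rhoMeas A B y)) / 2, by nlinarith, by linarith⟩
  have hu0 : 0 < u := hε.trans_le huε
  have := tail (t := t) A B hA y (ε / (2 * u)) (u ^ 2) (by
      rw [abs_of_pos (by positivity), div_le_one (by positivity)]; linarith)
      (fun a => bad2 A B ε a y) (by
        intro a ha
        unfold bad2 at ha
        have hr : 0 ≤ empN B a y / t := div_nonneg (empN_nonneg B a y) ht'.le
        have hv := Real.sq_sqrt hr
        have hv0 := Real.sqrt_nonneg (empN B a y / t)
        set v := √(empN B a y / t)
        have huv : u ≤ v := by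
          by_contra! hlt
          nlinarith
        have h1 : u ^ 2 ≤ empN B a y / t := by rw [← hv]; gcongr
        rw [le_div_iff₀ ht'] at h1
        have : 0 < ε / (2 * u) := by positivity
        nlinarith) (-(ε ^ 2) / 4) (by
        have h1 : rhoMeas A B y = u ^ 2 - ε * u := by linarith
        have h2 : (u ^ 2 - ε * u) * (ε / (2 * u) + (ε / (2 * u)) ^ 2) - ε / (2 * u) * u ^ 2
          = -(ε ^ 2) / 4 - ε ^ 3 / (4 * u) := by field_simp; ring
        rw [h1, h2]
        have : 0 ≤ ε ^ 3 / (4 * u) := by positivity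
        linarith)
  convert this using 3
  ring

lemma bad1_mem {n t : ℕ} {A B : Finset (Fin n → ZMod 2)} {ε : ℝ}
    {a : Fin t → (Fin n → ZMod 2)} {y : Fin n → ZMod 2} (h : bad1 A B ε a y) : y ∈ A + B := by
  by_contra hy
  have : rhoMeas A B y = 0 := by
    unfold rhoMeas
    rw [Finset.filter_false_of_mem fun a ha hb => hy (mem_of_add ha hb)]; simp
  unfold bad1 at h
  rw [this] at h
  have := empN_nonneg B a y
  simp at h
  linarith

lemma bad2_mem {n t : ℕ} {A B : Finset (Fin n → ZMod 2)} {ε : ℝ}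
    {a : Fin t → (Fin n → ZMod 2)} (ha : ∀ i, a i ∈ A) {y : Fin n → ZMod 2}
    (h : bad2 A B ε a y) : y ∈ A + B := by
  by_contra hy
  have : empN B a y = 0 := by
    unfold empN
    exact Finset.sum_eq_zero fun i _ => if_neg fun hb => hy (mem_of_add (ha i) hb)
  unfold bad2 at h
  rw [this] at h
  have := rho_nonneg A B y
  simp at h
  linarith

lemma stepineq {p q r ε : ℝ} (hε : 0 < ε) (hp : 0 ≤ p) (hq : 0 ≤ q) (hr : 0 ≤ r)
    {k : ℝ} (hk : 0 ≤ k)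
    (h1 : p - k * ε * √p ≤ r) (h2 : r - ε * √r ≤ q) : p - (k + 1) * ε * √p ≤ q := by
  have hv := Real.sq_sqrt hr
  have hv0 := Real.sqrt_nonneg r
  have hu := Real.sq_sqrt hp
  have hu0 := Real.sqrt_nonneg p
  set v := √r
  set u := √p
  have hku : 0 ≤ k * ε * u := by positivity
  rcases le_total v u with h | h
  · nlinarith
  · by_cases hc : u ≤ ε
    · nlinarith
    · push Not at hc
      nlinarith

lemma good_exists {n t : ℕ} (ht : 0 < t) (A B : Finset (Fin n → ZMod 2)) (hA : A.Nonempty)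
    (ε : ℝ) (hε : 0 < ε) :
    (A.card : ℝ) ^ t / 2 ≤ (((Fintype.piFinset (fun _ : Fin t => A)).filter fun a =>
      (((A + B).filter (bad1 A B ε a)).card : ℝ) + ((A + B).filter (bad2 A B ε a)).card ≤
        4 * ((A + B).card * Real.exp (-(ε ^ 2 * t) / 4))).card : ℝ) := by
  set T := Fintype.piFinset (fun _ : Fin t => A) with hT
  set e := Real.exp (-(ε ^ 2 * t) / 4) with he
  have he0 : 0 < e := Real.exp_pos _
  have hcT : (T.card : ℝ) = (A.card : ℝ) ^ t := by simp [hT]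
  have sw : ∀ P : (Fin t → (Fin n → ZMod 2)) → (Fin n → ZMod 2) → Prop,
      (∀ y, ((T.filter fun a => P a y).card : ℝ) ≤ (A.card : ℝ) ^ t * e) →
      ∑ a ∈ T, (((A + B).filter (P a)).card : ℝ) ≤ (A + B).card * ((A.card : ℝ) ^ t * e) := by
    intro P hP
    have : ∑ a ∈ T, (((A + B).filter (P a)).card : ℝ) =
        ∑ y ∈ A + B, ((T.filter fun a => P a y).card : ℝ) := by
      simp_rw [← Finset.sum_boole]
      rw [Finset.sum_comm]
    rw [this, ← nsmul_eq_mul]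
    exact Finset.sum_le_card_nsmul _ _ _ fun y _ => hP y
  have s1 := sw (bad1 A B ε) fun y => tail1 A B hA y ε hε
  have s2 := sw (bad2 A B ε) fun y => tail2 ht A B hA y ε hε
  set f : (Fin t → (Fin n → ZMod 2)) → ℝ := fun a =>
    (((A + B).filter (bad1 A B ε a)).card : ℝ) + ((A + B).filter (bad2 A B ε a)).card with hf
  have hs : ∑ a ∈ T, f a ≤ 2 * ((A + B).card * e) * (A.card : ℝ) ^ t := by
    rw [hf, Finset.sum_add_distrib]; linarith
  have hf0 : ∀ a, 0 ≤ f a := fun a => by rw [hf]; positivity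
  change _ ≤ ((T.filter fun a => f a ≤ 4 * ((A + B).card * e)).card : ℝ)
  rcases (A + B).eq_empty_or_nonempty with h0 | h0
  · have : T.filter (fun a => f a ≤ 4 * ((A + B).card * e)) = T := by
      refine Finset.filter_true_of_mem fun a _ => ?_
      simp [hf, h0]
    rw [this, hcT]
    have : (0:ℝ) ≤ (A.card : ℝ) ^ t := by positivity
    linarith
  · have hD : 0 < (A + B).card * e := mul_pos (by exact_mod_cast h0.card_pos) he0
    set D := (A + B).card * e
    have hsplit : ((T.filter fun a => f a ≤ 4 * D).card : ℝ) +
        (T.filter fun a => ¬ f a ≤ 4 * D).card = T.card := by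
      exact_mod_cast Finset.card_filter_add_card_filter_not _
    have hm : ((T.filter fun a => ¬ f a ≤ 4 * D).card : ℝ) * (4 * D) ≤ ∑ a ∈ T, f a := by
      rw [← nsmul_eq_mul]
      refine (Finset.card_nsmul_le_sum _ f _ ?_).trans
        (Finset.sum_le_sum_of_subset_of_nonneg (Finset.filter_subset _ _) fun _ _ _ => hf0 _)
      intro a ha
      exact (not_le.1 (Finset.mem_filter.1 ha).2).le
    have : ((T.filter fun a => ¬ f a ≤ 4 * D).card : ℝ) ≤ (A.card : ℝ) ^ t / 2 := by
      refine le_of_mul_le_mul_right (a := 4 * D) ?_ (by positivity)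
      linarith
    linarith

lemma exists_X {n t : ℕ} (ht : 0 < t) (K : ℝ) (hK : 1 ≤ K)
    (A : Finset (Fin n → ZMod 2)) (hA : A.Nonempty)
    (hdoub : ((A + A).card : ℝ) ≤ K * A.card)
    (G : Finset (Fin t → (Fin n → ZMod 2))) (hG : G ⊆ Fintype.piFinset (fun _ : Fin t => A))
    (hGc : (A.card : ℝ) ^ t / 2 ≤ G.card) :
    ∃ a0 ∈ G, ∃ X : Finset (Fin n → ZMod 2),
      (∃ c : Fin n → ZMod 2, X ⊆ A.image (fun a => c + a)) ∧
      (A.card : ℝ) / (2 * K ^ (t - 1)) ≤ X.card ∧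
      ∀ x ∈ X, (fun i => x + a0 i) ∈ G := by
  obtain ⟨m, rfl⟩ : ∃ m, t = m + 1 := ⟨t - 1, by omega⟩
  simp only [Nat.add_sub_cancel]
  have hA0 : (0:ℝ) < A.card := by exact_mod_cast hA.card_pos
  have hK0 : 0 < K := by linarith
  set φ : (Fin (m+1) → (Fin n → ZMod 2)) → (Fin m → (Fin n → ZMod 2)) :=
    fun a i => a i.succ + a 0 with hφ
  have hmaps : ∀ a ∈ G, φ a ∈ Fintype.piFinset (fun _ : Fin m => A + A) := by
    intro a ha
    have := Fintype.mem_piFinset.1 (hG ha)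
    exact Fintype.mem_piFinset.2 fun i => Finset.add_mem_add (this _) (this _)
  have hne : (Fintype.piFinset (fun _ : Fin m => A + A)).Nonempty :=
    Fintype.piFinset_nonempty.2 fun _ => hA.add hA
  obtain ⟨d, -, hd⟩ := Finset.exists_le_card_fiber_of_nsmul_le_card_of_maps_to
    (b := (A.card : ℝ) / (2 * K ^ m)) hmaps hne (by
      rw [nsmul_eq_mul]
      refine le_trans ?_ hGc
      simp only [Fintype.card_piFinset, Finset.prod_const, Finset.card_univ, Fintype.card_fin]
      push_cast
      calc ((A + A).card : ℝ) ^ m * (A.card / (2 * K ^ m))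
          ≤ (K * A.card) ^ m * (A.card / (2 * K ^ m)) := by gcongr
        _ = _ := by rw [mul_pow, pow_succ]; field_simp)
  set F := G.filter fun a => φ a = d with hF
  have hFne : F.Nonempty := by
    rw [← Finset.card_pos]
    have : (0:ℝ) < F.card := lt_of_lt_of_le (by positivity) hd
    exact_mod_cast this
  obtain ⟨a0, ha0⟩ := hFne
  have ha0' := Finset.mem_filter.1 ha0
  have key : ∀ a ∈ F, ∀ i, a i = (a0 0 + a 0) + a0 i := by
    intro a ha i
    have ha' := Finset.mem_filter.1 ha
    refine Fin.cases ?_ (fun j => ?_) i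
    · rw [add_comm (a0 0), add_assoc, chartwo, add_zero]
    · have h := congrFun (ha'.2.trans ha0'.2.symm) j
      simp only [hφ] at h
      calc a j.succ = (a j.succ + a 0) + a 0 := by rw [add_assoc, chartwo, add_zero]
        _ = _ := by rw [h]; abel
  refine ⟨a0, ha0'.1, F.image (fun a => a0 0 + a 0), ⟨a0 0, ?_⟩, ?_, ?_⟩
  · intro x hx
    obtain ⟨a, ha, rfl⟩ := Finset.mem_image.1 hx
    exact Finset.mem_image.2 ⟨a 0,
      Fintype.mem_piFinset.1 (hG (Finset.mem_filter.1 ha).1) 0, rfl⟩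
  · rw [Finset.card_image_of_injOn]
    · exact hd
    · intro a ha b hb hab
      funext i
      rw [key a ha i, key b hb i]
      simp only at hab
      rw [hab]
  · intro x hx
    obtain ⟨a, ha, rfl⟩ := Finset.mem_image.1 hx
    have : (fun i => a0 0 + a 0 + a0 i) = a := by funext i; exact (key a ha i).symm
    rw [this]
    exact (Finset.mem_filter.1 ha).1

theorem refined_almost_periodicity_of_sumsets_iterated {n : ℕ} (K : ℝ) (hK : 1 ≤ K)
    (A : Finset (Fin n → ZMod 2)) (hA : A.Nonempty)
    (hdoub : ((A + A).card : ℝ) ≤ K * A.card)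
    (ε : ℝ) (hε : 0 < ε) (t : ℕ) (ht : 0 < t) (B : Finset (Fin n → ZMod 2)) :
    ∃ X : Finset (Fin n → ZMod 2),
      (∃ c : Fin n → ZMod 2, X ⊆ A.image (fun a => c + a)) ∧
      (A.card : ℝ) / (2 * K ^ (t - 1)) ≤ X.card ∧
      ∀ ℓ : ℕ, 0 < ℓ → ∀ x : Fin ℓ → (Fin n → ZMod 2), (∀ i, x i ∈ X) →
        ∀ S : Finset (Fin n → ZMod 2), S.Nonempty →
          1 - 8 * ℓ * (((A + B).card : ℝ) / S.card) * Real.exp (-(ε ^ 2 * t) / 4) ≤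
            prOver S (fun y =>
              rhoMeas A B y - rhoMeas A B (y + ∑ i, x i) ≤
                2 * ε * ℓ * Real.sqrt (rhoMeas A B y)) := by
  obtain ⟨a0, ha0, X, hXc, hXcard, hX⟩ := exists_X ht K hK A hA hdoub _ (Finset.filter_subset _ _)
    (good_exists ht A B hA ε hε)
  refine ⟨X, hXc, hXcard, ?_⟩
  set e := Real.exp (-(ε ^ 2 * t) / 4) with he
  have ht' : (0:ℝ) < t := by exact_mod_cast ht
  have hgood0 := Finset.mem_filter.1 ha0
  -- single step
  have step : ∀ x ∈ X, ∃ Z : Finset (Fin n → ZMod 2), (Z.card : ℝ) ≤ 8 * ((A + B).card * e) ∧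
      ∀ y, y ∉ Z → rhoMeas A B y - (1 + 1) * ε * √(rhoMeas A B y) ≤ rhoMeas A B (y + x) := by
    intro x hx
    have hg := Finset.mem_filter.1 (hX x hx)
    refine ⟨(A + B).filter (bad1 A B ε (fun i => x + a0 i)) ∪
      ((A + B).filter (bad2 A B ε a0)).image (fun z => z + x), ?_, ?_⟩
    · have h1 := Finset.card_union_le ((A + B).filter (bad1 A B ε (fun i => x + a0 i)))
        (((A + B).filter (bad2 A B ε a0)).image (fun z => z + x))
      have h2 := Finset.card_image_le (s := (A + B).filter (bad2 A B ε a0)) (f := fun z => z + x)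
      have h3 : ((((A + B).filter (bad1 A B ε (fun i => x + a0 i)) ∪
        ((A + B).filter (bad2 A B ε a0)).image (fun z => z + x)).card : ℕ) : ℝ) ≤
        (((A + B).filter (bad1 A B ε (fun i => x + a0 i))).card : ℝ) +
        ((A + B).filter (bad2 A B ε a0)).card := by
        exact_mod_cast h1.trans (Nat.add_le_add_left h2 _)
      have h4 := hg.2
      have h5 := hgood0.2
      have h6 : (0:ℝ) ≤ (((A + B).filter (bad2 A B ε (fun i => x + a0 i))).card : ℝ) := by positivity
      have h7 : (0:ℝ) ≤ (((A + B).filter (bad1 A B ε a0)).card : ℝ) := by positivity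
      linarith
    · intro y hy
      rw [Finset.mem_union, not_or] at hy
      have n1 : ¬ bad1 A B ε (fun i => x + a0 i) y := fun h =>
        hy.1 (Finset.mem_filter.2 ⟨bad1_mem h, h⟩)
      have n2 : ¬ bad2 A B ε a0 (y + x) := fun h =>
        hy.2 (Finset.mem_image.2 ⟨y + x, Finset.mem_filter.2
          ⟨bad2_mem (Fintype.mem_piFinset.1 hgood0.1) h, h⟩, by
            rw [add_assoc, chartwo, add_zero]⟩)
      have heq : empN B (fun i => x + a0 i) y = empN B a0 (y + x) := by
        unfold empN; simp only [add_assoc]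
      unfold bad1 at n1
      unfold bad2 at n2
      rw [not_lt] at n1 n2
      rw [heq] at n1
      refine stepineq (r := empN B a0 (y + x) / t) hε (rho_nonneg _ _ _) (rho_nonneg _ _ _)
        (div_nonneg (empN_nonneg _ _ _) ht'.le) zero_le_one ?_ n2
      rw [le_div_iff₀ ht']
      linarith
  -- iterate
  have iter : ∀ ℓ : ℕ, ∀ x : Fin ℓ → (Fin n → ZMod 2), (∀ i, x i ∈ X) →
      ∃ Z : Finset (Fin n → ZMod 2), (Z.card : ℝ) ≤ ℓ * (8 * ((A + B).card * e)) ∧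
      ∀ y, y ∉ Z → rhoMeas A B y - ℓ * (2 * ε) * √(rhoMeas A B y) ≤
        rhoMeas A B (y + ∑ i, x i) := by
    intro ℓ
    induction ℓ with
    | zero => intro x _; exact ⟨∅, by simp, fun y _ => by simp⟩
    | succ k ih =>
      intro x hx
      obtain ⟨Z, hZ, hZ'⟩ := ih (fun i => x i.castSucc) (fun i => hx _)
      obtain ⟨W, hW, hW'⟩ := step (x (Fin.last k)) (hx _)
      set σ := ∑ i : Fin k, x i.castSucc with hσ
      refine ⟨Z ∪ W.image (fun w => w + σ), ?_, ?_⟩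
      · have h1 : ((Z ∪ W.image (fun w => w + σ)).card : ℝ) ≤ Z.card + W.card := by
          exact_mod_cast (Finset.card_union_le _ _).trans
            (Nat.add_le_add_left Finset.card_image_le _)
        push_cast
        linarith
      · intro y hy
        rw [Finset.mem_union, not_or] at hy
        have h1 := hZ' y hy.1
        have h2 := hW' (y + σ) (fun h => hy.2 (Finset.mem_image.2 ⟨y + σ, h, by
          rw [add_assoc, chartwo, add_zero]⟩))
        rw [Fin.sum_univ_castSucc, ← add_assoc]
        push_cast
        refine stepineq (ε := 2 * ε) (by positivity) (rho_nonneg _ _ _) (rho_nonneg _ _ _)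
          (rho_nonneg A B (y + σ)) (Nat.cast_nonneg k) h1 ?_
        linarith
  intro ℓ _ x hx S hS
  obtain ⟨Z, hZ, hZ'⟩ := iter ℓ x hx
  have hS0 : (0:ℝ) < S.card := by exact_mod_cast hS.card_pos
  unfold prOver
  rw [le_div_iff₀ hS0]
  have hsub : S \ Z ⊆ S.filter (fun y => rhoMeas A B y - rhoMeas A B (y + ∑ i, x i) ≤
      2 * ε * ℓ * Real.sqrt (rhoMeas A B y)) := by
    intro y hy
    rw [Finset.mem_sdiff] at hy
    refine Finset.mem_filter.2 ⟨hy.1, ?_⟩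
    have := hZ' y hy.2
    linarith
  have h1 : (S.card : ℝ) ≤ (S \ Z).card + Z.card := by
    exact_mod_cast (by have := Finset.le_card_sdiff Z S; omega : S.card ≤ (S \ Z).card + Z.card)
  have h2 : ((S \ Z).card : ℝ) ≤ (S.filter (fun y => rhoMeas A B y - rhoMeas A B (y + ∑ i, x i) ≤
      2 * ε * ℓ * Real.sqrt (rhoMeas A B y))).card := by
    exact_mod_cast Finset.card_le_card hsub
  have h3 : (1 - 8 * ℓ * (((A + B).card : ℝ) / S.card) * e) * S.card =
      S.card - ℓ * (8 * ((A + B).card * e)) := by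
    field_simp
  rw [h3]
  linarith
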